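/- arXiv:math/0507071 — 5 statements merged into one kernel-verified Lean document; each statement's English description precedes it below -/
import Mathlib

section
/- Let γ : ℤ₊² → ℝ, let u ∈ ℤ₊² with γ_u > 0, and let k ≥ 1. Then the real matrix (γ_{u+(m,n)+(p,q)})_{0≤p+q≤k, 0≤m+n≤k} (rows indexed by pairs (m,n) with 0 ≤ m+n ≤ k, columns by pairs (p,q) with 0 ≤ p+q ≤ k) is positive semidefinite if and only if the matrix (γ_u γ_{u+(m,n)+(p,q)} − γ_{u+(m,n)} γ_{u+(p,q)})_{1≤p+q≤k, 1≤m+n≤k} is positive semidefinite. -/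
noncomputable section

/-- The index set `{(m, n) : 1 ≤ m + n ≤ k}`. -/
def idx (k : ℕ) : Finset (ℕ × ℕ) :=
  (Finset.range (k + 1) ×ˢ Finset.range (k + 1)).filter fun p => 1 ≤ p.1 + p.2 ∧ p.1 + p.2 ≤ k

/-- The index set `{(m, n) : 0 ≤ m + n ≤ k}`. -/
def idx0 (k : ℕ) : Finset (ℕ × ℕ) :=
  (Finset.range (k + 1) ×ˢ Finset.range (k + 1)).filter fun p => p.1 + p.2 ≤ k

/-!
Let `B` be the bilinear form of the larger matrix and `e` the coordinate vector at the index `0`.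
The form of the smaller matrix is `c ↦ B e e * B c c - B c e * B e c`, once its index set is
enlarged by `0`, where it has a zero row and a zero column. It is nonnegative by Cauchy–Schwarz
when `B` is; conversely `B e e * B c c` is this form plus a square.
-/

theorem bilinForm_nonneg_iff_of_pos_apply_self {R M : Type*} [CommRing R] [LinearOrder R]
    [IsStrictOrderedRing R] [AddCommGroup M] [Module R M] {B : LinearMap.BilinForm R M} {e : M}
    (he : 0 < B e e) (hsymm : ∀ x, B x e = B e x) :
    (∀ x, 0 ≤ B x x) ↔ ∀ x, 0 ≤ B e e * B x x - B x e * B e x := by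
  constructor
  · intro hB x
    rw [sub_nonneg, mul_comm (B e e)]
    exact B.apply_mul_apply_le_of_forall_zero_le hB x e
  · intro hSchur x
    refine nonneg_of_mul_nonneg_right ?_ he
    calc
      0 ≤ B e x * B e x := mul_self_nonneg _
      _ = B x e * B e x := by rw [hsymm]
      _ ≤ B e e * B x x := sub_nonneg.mp (hSchur x)

section FiniteSection

variable {ι R : Type*} [CommSemiring R]

/-- The bilinear form of the finite section `(A i j)_{i, j ∈ s}` of a matrix `A`. It acts on
functions on all of `ι`, of which only the values on `s` matter, so that sections over different
finite sets can be compared without subtypes. -/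
def finiteSectionForm (s : Finset ι) (A : ι → ι → R) : LinearMap.BilinForm R (ι → R) :=
  ∑ i ∈ s, ∑ j ∈ s, A i j • LinearMap.BilinForm.linMulLin (LinearMap.proj i) (LinearMap.proj j)

variable {s : Finset ι} {A : ι → ι → R} {p : ι}

theorem finiteSectionForm_apply (c d : ι → R) :
    finiteSectionForm s A c d = ∑ i ∈ s, ∑ j ∈ s, c i * A i j * d j := by
  simp only [finiteSectionForm, LinearMap.sum_apply, LinearMap.smul_apply, smul_eq_mul,
    LinearMap.BilinForm.linMulLin_apply, LinearMap.proj_apply, mul_left_comm, mul_assoc]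

variable [DecidableEq ι]

theorem finiteSectionForm_erase (hrow : ∀ j, A p j = 0) (hcol : ∀ i, A i p = 0) :
    finiteSectionForm (s.erase p) A = finiteSectionForm s A := by
  have inner (i : ι) (c d : ι → R) :
      ∑ j ∈ s.erase p, c i * A i j * d j = ∑ j ∈ s, c i * A i j * d j :=
    Finset.sum_erase s (by simp [hcol])
  refine LinearMap.ext₂ fun c d => ?_
  simp only [finiteSectionForm_apply, inner]
  exact Finset.sum_erase s (by simp [hrow])

theorem finiteSectionForm_single_right (hp : p ∈ s) (c : ι → R) :
    finiteSectionForm s A c (Pi.single p 1) = ∑ i ∈ s, c i * A i p := by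
  simp [finiteSectionForm_apply, Pi.single_apply, hp]

theorem finiteSectionForm_single_left (hp : p ∈ s) (d : ι → R) :
    finiteSectionForm s A (Pi.single p 1) d = ∑ j ∈ s, A p j * d j := by
  simp [finiteSectionForm_apply, Pi.single_apply, hp]

theorem finiteSectionForm_single_single (hp : p ∈ s) :
    finiteSectionForm s A (Pi.single p 1) (Pi.single p 1) = A p p := by
  simp [finiteSectionForm_single_right, Pi.single_apply, hp]

end FiniteSection

section SchurKernel

variable {ι R : Type*} [CommRing R]

/-- The Schur complement of the entry `A p p` in `A`, multiplied by `A p p` to avoid division.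
The index `p` is kept, with zero row and column. -/
def schurKernel (A : ι → ι → R) (p i j : ι) : R :=
  A p p * A i j - A i p * A p j

variable {s : Finset ι} {A : ι → ι → R} {p : ι}

theorem schurKernel_pivot_left (j : ι) : schurKernel A p p j = 0 :=
  sub_self _

theorem schurKernel_pivot_right (i : ι) : schurKernel A p i p = 0 :=
  sub_eq_zero.mpr (mul_comm _ _)

variable [DecidableEq ι]

theorem finiteSectionForm_schurKernel (hp : p ∈ s) (c d : ι → R) :
    finiteSectionForm s (schurKernel A p) c d =
      A p p * finiteSectionForm s A c d -
        finiteSectionForm s A c (Pi.single p 1) * finiteSectionForm s A (Pi.single p 1) d := by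
  rw [finiteSectionForm_single_right hp, finiteSectionForm_single_left hp, Finset.sum_mul_sum]
  simp only [finiteSectionForm_apply, Finset.mul_sum, ← Finset.sum_sub_distrib]
  refine Finset.sum_congr rfl fun i _ => Finset.sum_congr rfl fun j _ => ?_
  unfold schurKernel
  ring

theorem finiteSectionForm_nonneg_iff_schurKernel [LinearOrder R] [IsStrictOrderedRing R]
    (hp : p ∈ s) (hpos : 0 < A p p) (hsymm : ∀ i ∈ s, A i p = A p i) :
    (∀ c, 0 ≤ finiteSectionForm s A c c) ↔
      ∀ c, 0 ≤ finiteSectionForm (s.erase p) (schurKernel A p) c c := by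
  have he := finiteSectionForm_single_single (A := A) hp
  have hsymm_e (c : ι → R) :
      finiteSectionForm s A c (Pi.single p 1) = finiteSectionForm s A (Pi.single p 1) c := by
    rw [finiteSectionForm_single_right hp, finiteSectionForm_single_left hp]
    exact Finset.sum_congr rfl fun i hi => by rw [hsymm i hi, mul_comm]
  rw [bilinForm_nonneg_iff_of_pos_apply_self (he.symm ▸ hpos) hsymm_e, he,
    finiteSectionForm_erase schurKernel_pivot_left schurKernel_pivot_right]
  simp only [finiteSectionForm_schurKernel hp]

end SchurKernel

theorem moment_matrix_psd_iff_localized_psd_general {M R : Type*} [AddZeroClass M] [DecidableEq M]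
    [CommRing R] [LinearOrder R] [IsStrictOrderedRing R] (γ : M → R) (u : M) (hu : 0 < γ u)
    {s : Finset M} (hs : 0 ∈ s) :
    (∀ c : M → R, 0 ≤ ∑ i ∈ s, ∑ j ∈ s, c i * γ (u + i + j) * c j) ↔
      ∀ c : M → R, 0 ≤ ∑ i ∈ s.erase 0, ∑ j ∈ s.erase 0,
        c i * (γ u * γ (u + i + j) - γ (u + i) * γ (u + j)) * c j := by
  simpa only [finiteSectionForm_apply, schurKernel, add_zero] using
    finiteSectionForm_nonneg_iff_schurKernel (A := fun i j => γ (u + i + j)) hs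
      (by simpa only [add_zero] using hu) (fun i _ => by simp only [add_zero])

theorem zero_mem_idx0 (k : ℕ) : 0 ∈ idx0 k := by
  simp [idx0]

theorem idx_eq_erase_idx0 (k : ℕ) : idx k = (idx0 k).erase 0 := by
  ext ⟨m, n⟩
  simp only [idx0, idx, Finset.mem_filter, Finset.mem_product, Finset.mem_range,
    Finset.mem_erase, ne_eq, Prod.mk_eq_zero]
  omega

/-- Let `γ : ℤ₊² → ℝ`, `u ∈ ℤ₊²` with `γ_u > 0`, and `k ≥ 1`.  The matrix
`(γ_{u+(m,n)+(p,q)})_{0≤p+q≤k, 0≤m+n≤k}` is positive semidefinite iff the matrix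
`(γ_u γ_{u+(m,n)+(p,q)} − γ_{u+(m,n)} γ_{u+(p,q)})_{1≤p+q≤k, 1≤m+n≤k}` is positive
semidefinite. -/
theorem moment_matrix_psd_iff_localized_psd (γ : ℕ × ℕ → ℝ) (u : ℕ × ℕ)
    (hu : 0 < γ u) (k : ℕ) (hk : 1 ≤ k) :
    (∀ c : ℕ × ℕ → ℝ,
        0 ≤ ∑ mn ∈ idx0 k, ∑ pq ∈ idx0 k, c mn * γ (u + mn + pq) * c pq) ↔
      (∀ c : ℕ × ℕ → ℝ,
        0 ≤ ∑ mn ∈ idx k, ∑ pq ∈ idx k,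
          c mn * (γ u * γ (u + mn + pq) - γ (u + mn) * γ (u + pq)) * c pq) := by
  rw [idx_eq_erase_idx0]
  exact moment_matrix_psd_iff_localized_psd_general γ u hu (zero_mem_idx0 k)
end
end

section
/- For 0 < y ≤ 1, define x₀ := y√(3/4) and xₙ := √((n+1)(n+3))/(n+2) for n ≥ 1. Then the unilateral weighted shift W_x on ℓ²(ℤ₊) with weight sequence (x₀,x₁,x₂,…) is subnormal; moreover, the measure μ_x := (1−y²)δ₀ + (y²/2)λ + (y²/2)δ₁ on [0,1] (δ denotes Dirac measure, λ Lebesgue measure on [0,1]) is a probability measure satisfying ∫ sⁿ dμ_x(s) = x₀²x₁²⋯x_{n−1}² for every integer n ≥ 1. -/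
open ContinuousLinearMap MeasureTheory

noncomputable section

/-- The Hilbert space `ℓ²(ℤ₊)`. -/
abbrev ℓ2 : Type := lp (fun _ : ℕ => ℂ) 2

/-- The canonical orthonormal basis vector `eₙ` of `ℓ²(ℤ₊)`. -/
def e (n : ℕ) : ℓ2 := lp.single 2 n 1

/-- A bounded operator `W` on a complex Hilbert space is *subnormal* if there are a complex
Hilbert space `K`, a linear isometry `V : H → K` and a normal bounded operator `N` on `K`
with `N V = V W` (so that the range of `V` is invariant under `N`). -/
def SubnormalOp {H : Type} [NormedAddCommGroup H] [InnerProductSpace ℂ H] [CompleteSpace H]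
    (W : H →L[ℂ] H) : Prop :=
  ∃ (K : Type) (_ : NormedAddCommGroup K) (_ : InnerProductSpace ℂ K) (_ : CompleteSpace K)
    (N : K →L[ℂ] K) (V : H →ₗᵢ[ℂ] K),
    (adjoint N ∘L N = N ∘L adjoint N) ∧ (∀ x, N (V x) = V (W x))

/-- The weight sequence `x₀ = y√(3/4)`, `xₙ = √((n+1)(n+3))/(n+2)` for `n ≥ 1`. -/
def xseq (y : ℝ) : ℕ → ℝ
  | 0 => y * Real.sqrt (3 / 4)
  | n + 1 => Real.sqrt (((n : ℝ) + 2) * ((n : ℝ) + 4)) / ((n : ℝ) + 3)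

/-- The measure `μ_x = (1−y²)δ₀ + (y²/2)λ + (y²/2)δ₁` on `[0,1]`
(`δ` Dirac measures, `λ` Lebesgue measure on `[0,1]`). -/
def mux (y : ℝ) : Measure ℝ :=
  ENNReal.ofReal (1 - y ^ 2) • Measure.dirac 0 +
    ENNReal.ofReal (y ^ 2 / 2) • volume.restrict (Set.Icc (0 : ℝ) 1) +
    ENNReal.ofReal (y ^ 2 / 2) • Measure.dirac 1

/-!
A weighted shift with nonzero weights is modelled by a normal operator `N` and a vector `u` whose
orbit `u, N u, N² u, …` is orthogonal with the right norms: the basis vectors then correspond to the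
normalised orbit. If `∏ i < n, |αᵢ|²` is the `n`-th moment of a measure `μ` on `[0, R]`, such a pair
is multiplication by `√s e^{2πit}` on `L²(μ ⊗ dt)` together with `u = 1`: the circle variable makes
the powers orthogonal, and `‖N ^ n u‖² = ∫ sⁿ dμ`. This is the easy half of Berger's theorem. For
the weights `x` the squared products telescope to `(y²/2)(1 + 1/(n+1))`, the moments of `μ_x`.
-/

open scoped ENNReal ComplexConjugate InnerProductSpace

section HilbertBasis

variable {ι 𝕜 E F : Type*} [RCLike 𝕜] [NormedAddCommGroup E] [InnerProductSpace 𝕜 E]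
  [NormedAddCommGroup F]

lemma exists_linearIsometry_apply_hilbertBasis [InnerProductSpace 𝕜 F] [CompleteSpace F]
    (b : HilbertBasis ι 𝕜 E) {v : ι → F} (hv : Orthonormal 𝕜 v) :
    ∃ V : E →ₗᵢ[𝕜] F, ∀ i, V (b i) = v i := by
  classical
  refine ⟨hv.orthogonalFamily.linearIsometry.comp b.repr.toLinearIsometry, fun i => ?_⟩
  simp [b.repr_self, hv.orthogonalFamily.linearIsometry_apply_single]

lemma continuousLinearMap_ext_hilbertBasis [NormedSpace 𝕜 F] (b : HilbertBasis ι 𝕜 E)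
    {S T : E →L[𝕜] F} (h : ∀ i, S (b i) = T (b i)) : S = T :=
  ContinuousLinearMap.ext_on
    (Submodule.dense_iff_topologicalClosure_eq_top.2 b.dense_span) (by rintro _ ⟨i, rfl⟩; exact h i)

end HilbertBasis

section Subnormal

variable {H : Type} [NormedAddCommGroup H] [InnerProductSpace ℂ H] [CompleteSpace H]
  {K : Type} [NormedAddCommGroup K] [InnerProductSpace ℂ K] [CompleteSpace K]

lemma subnormalOp_of_hilbertBasis {ι : Type*} (b : HilbertBasis ι ℂ H) {W : H →L[ℂ] H}
    {N : K →L[ℂ] K} (hN : IsStarNormal N) (V : H →ₗᵢ[ℂ] K) (hV : ∀ i, N (V (b i)) = V (W (b i))) :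
    SubnormalOp W := by
  have hNV : N ∘L V.toContinuousLinearMap = V.toContinuousLinearMap ∘L W :=
    continuousLinearMap_ext_hilbertBasis b hV
  exact ⟨K, _, _, inferInstance, N, V, hN.star_comm_self.eq, fun x => DFunLike.congr_fun hNV x⟩

theorem subnormalOp_weightedShift_of_orbit (b : HilbertBasis ℕ ℂ H) {W : H →L[ℂ] H} {α : ℕ → ℂ}
    (hα : ∀ n, α n ≠ 0) (hW : ∀ n, W (b n) = α n • b (n + 1))
    {N : K →L[ℂ] K} (hN : IsStarNormal N) {u : K}
    (hnorm : ∀ n, ‖(N ^ n) u‖ ^ 2 = ∏ i ∈ Finset.range n, ‖α i‖ ^ 2)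
    (horth : ∀ m n, m ≠ n → ⟪(N ^ m) u, (N ^ n) u⟫_ℂ = 0) :
    SubnormalOp W := by
  let c : ℕ → ℂ := fun n => ∏ i ∈ Finset.range n, α i
  have hc : ∀ n, c n ≠ 0 := fun n => Finset.prod_ne_zero_iff.2 fun i _ => hα i
  have hnorm' : ∀ n, ‖(N ^ n) u‖ = ‖c n‖ := fun n => by
    rw [← sq_eq_sq₀ (norm_nonneg _) (norm_nonneg _), hnorm, Finset.prod_pow, norm_prod]
  have hv : Orthonormal ℂ fun n => (c n)⁻¹ • (N ^ n) u := by
    refine ⟨fun n => ?_, fun m n hmn => ?_⟩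
    · rw [norm_smul, norm_inv, hnorm', inv_mul_cancel₀ (norm_ne_zero_iff.2 (hc n))]
    · simp only [inner_smul_left, inner_smul_right, horth m n hmn, mul_zero]
  obtain ⟨V, hV⟩ := exists_linearIsometry_apply_hilbertBasis b hv
  refine subnormalOp_of_hilbertBasis b hN V fun n => ?_
  have hcn : (c n)⁻¹ = α n * (c (n + 1))⁻¹ := by
    rw [show c (n + 1) = c n * α n from Finset.prod_range_succ α n, mul_inv_rev,
      mul_inv_cancel_left₀ (hα n)]
  rw [hW, map_smul, hV, hV, map_smul, pow_succ', mul_apply_eq_comp, smul_smul, hcn]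

end Subnormal

section MulLp

variable {X 𝕜 : Type*} [RCLike 𝕜] [MeasurableSpace X] {μ : Measure X}

/-- The operator of multiplication by an essentially bounded function `a` on `L²(μ)`. -/
def mulLp (a : Lp 𝕜 ∞ μ) : Lp 𝕜 2 μ →L[𝕜] Lp 𝕜 2 μ :=
  (ContinuousLinearMap.mul 𝕜 𝕜).holderL μ ∞ 2 2 a

lemma coeFn_mulLp (a : Lp 𝕜 ∞ μ) (f : Lp 𝕜 2 μ) : mulLp a f =ᵐ[μ] fun x => a x * f x :=
  (ContinuousLinearMap.mul 𝕜 𝕜).coeFn_holder (r := 2) a f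

lemma coeFn_mulLp_pow (a : Lp 𝕜 ∞ μ) (n : ℕ) (f : Lp 𝕜 2 μ) :
    (mulLp a ^ n) f =ᵐ[μ] fun x => a x ^ n * f x := by
  induction n with
  | zero => simp
  | succ n ih =>
    rw [pow_succ', mul_apply_eq_comp]
    filter_upwards [coeFn_mulLp a ((mulLp a ^ n) f), ih] with x hx hn
    rw [hx, hn, pow_succ', mul_assoc]

lemma commute_mulLp (a b : Lp 𝕜 ∞ μ) : Commute (mulLp a) (mulLp b) := by
  refine ContinuousLinearMap.ext fun f => Lp.ext ?_
  simp only [mul_apply_eq_comp]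
  filter_upwards [coeFn_mulLp a (mulLp b f), coeFn_mulLp b f, coeFn_mulLp b (mulLp a f),
    coeFn_mulLp a f] with x hab hb hba ha
  rw [hab, hb, hba, ha, mul_left_comm]

lemma adjoint_mulLp (a : Lp 𝕜 ∞ μ) : adjoint (mulLp a) = mulLp (star a) := by
  refine ((ContinuousLinearMap.eq_adjoint_iff _ _).2 fun f g => ?_).symm
  rw [L2.inner_def, L2.inner_def]
  refine integral_congr_ae ?_
  filter_upwards [coeFn_mulLp (star a) f, coeFn_mulLp a g, Lp.coeFn_star a] with x hf hg ha
  simp only [hf, hg, ha, Pi.star_apply, RCLike.inner_apply, RCLike.star_def, map_mul,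
    RCLike.conj_conj]
  ring

lemma isStarNormal_mulLp (a : Lp 𝕜 ∞ μ) : IsStarNormal (mulLp a) where
  star_comm_self := by
    rw [star_eq_adjoint, adjoint_mulLp]
    exact commute_mulLp _ _

lemma inner_mulLp_pow_const_one [IsFiniteMeasure μ] {g : X → 𝕜} (hg : MemLp g ∞ μ) (m n : ℕ) :
    ⟪(mulLp (hg.toLp g) ^ m) (Lp.const 2 μ 1), (mulLp (hg.toLp g) ^ n) (Lp.const 2 μ 1)⟫_𝕜 =
      ∫ x, conj (g x ^ m) * g x ^ n ∂μ := by
  rw [L2.inner_def]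
  refine integral_congr_ae ?_
  filter_upwards [coeFn_mulLp_pow (hg.toLp g) m (Lp.const 2 μ 1),
    coeFn_mulLp_pow (hg.toLp g) n (Lp.const 2 μ 1), hg.coeFn_toLp, Lp.coeFn_const 2 μ (1 : 𝕜)]
    with x hm hn hgx h1
  rw [hm, hn, hgx, h1, Function.const_apply, mul_one, mul_one, RCLike.inner_apply']

end MulLp

section PolarSqrt

/-- The map `(s, t) ↦ √s e^{2πit}`: polar coordinates on the plane, with the square of the radius as
first coordinate. -/
def polarSqrt (p : ℝ × UnitAddCircle) : ℂ := (√p.1 : ℂ) * fourier 1 p.2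

lemma continuous_polarSqrt : Continuous polarSqrt := by
  unfold polarSqrt
  fun_prop

lemma norm_polarSqrt (p : ℝ × UnitAddCircle) : ‖polarSqrt p‖ = √p.1 := by
  rw [polarSqrt, norm_mul, Complex.norm_real, Real.norm_of_nonneg (Real.sqrt_nonneg _),
    fourier_apply, Circle.norm_coe, mul_one]

lemma polarSqrt_pow (p : ℝ × UnitAddCircle) (n : ℕ) :
    polarSqrt p ^ n = ((√p.1 ^ n : ℝ) : ℂ) * fourier n p.2 := by
  simp [polarSqrt, mul_pow, fourier_apply, AddCircle.toCircle_nsmul]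

variable {μ : Measure ℝ}

lemma memLp_top_polarSqrt {R : ℝ} (hμ : ∀ᵐ s ∂μ, s ≤ R) :
    MemLp polarSqrt ∞ (μ.prod AddCircle.haarAddCircle) := by
  refine memLp_top_of_bound continuous_polarSqrt.aestronglyMeasurable √R ?_
  filter_upwards [Measure.quasiMeasurePreserving_fst.ae hμ] with p hp
  exact (norm_polarSqrt p).trans_le (Real.sqrt_le_sqrt hp)

lemma integral_conj_polarSqrt_pow_mul_pow [SFinite μ] (hμ : ∀ᵐ s ∂μ, 0 ≤ s) (m n : ℕ) :
    ∫ p, conj (polarSqrt p ^ m) * polarSqrt p ^ n ∂(μ.prod AddCircle.haarAddCircle) =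
      if m = n then ((∫ s, s ^ n ∂μ : ℝ) : ℂ) else 0 := by
  have hsplit : ∀ p : ℝ × UnitAddCircle, conj (polarSqrt p ^ m) * polarSqrt p ^ n =
      ((√p.1 ^ (m + n) : ℝ) : ℂ) * (fourier (-(m : ℤ)) p.2 • fourier (n : ℤ) p.2) := fun p => by
    rw [polarSqrt_pow, polarSqrt_pow, map_mul, Complex.conj_ofReal, ← fourier_neg, pow_add,
      Complex.ofReal_mul, smul_eq_mul]
    ring
  simp_rw [hsplit]
  rw [integral_prod_mul (μ := μ) (fun s : ℝ => ((√s ^ (m + n) : ℝ) : ℂ)) fun t : UnitAddCircle =>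
    fourier (-(m : ℤ)) t • fourier (n : ℤ) t, integral_complex_ofReal]
  change _ * fourierCoeff (fourier (n : ℤ)) m = _
  rw [fourierCoeff_fourier]
  obtain rfl | hmn := eq_or_ne m n
  · have hsqrt : ∫ s, √s ^ (m + m) ∂μ = ∫ s, s ^ m ∂μ := integral_congr_ae <| by
      filter_upwards [hμ] with s hs
      rw [← two_mul, pow_mul, Real.sq_sqrt hs]
    simp [hsqrt]
  · simp [hmn]

end PolarSqrt

theorem subnormalOp_weightedShift_of_moments {H : Type} [NormedAddCommGroup H]
    [InnerProductSpace ℂ H] [CompleteSpace H] (b : HilbertBasis ℕ ℂ H) {W : H →L[ℂ] H} {α : ℕ → ℂ}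
    (hα : ∀ n, α n ≠ 0) (hW : ∀ n, W (b n) = α n • b (n + 1))
    {μ : Measure ℝ} [IsFiniteMeasure μ] {R : ℝ} (hμ : ∀ᵐ s ∂μ, s ∈ Set.Icc 0 R)
    (hmoment : ∀ n, ∫ s, s ^ n ∂μ = ∏ i ∈ Finset.range n, ‖α i‖ ^ 2) :
    SubnormalOp W := by
  have hg : MemLp polarSqrt ∞ (μ.prod AddCircle.haarAddCircle) :=
    memLp_top_polarSqrt (hμ.mono fun _ hs => hs.2)
  have hinner : ∀ m n, ⟪(mulLp (hg.toLp _) ^ m) (Lp.const 2 _ 1),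
      (mulLp (hg.toLp _) ^ n) (Lp.const 2 _ 1)⟫_ℂ =
        if m = n then ((∫ s, s ^ n ∂μ : ℝ) : ℂ) else 0 := fun m n =>
    (inner_mulLp_pow_const_one hg m n).trans
      (integral_conj_polarSqrt_pow_mul_pow (hμ.mono fun _ hs => hs.1) m n)
  refine subnormalOp_weightedShift_of_orbit b hα hW (isStarNormal_mulLp (hg.toLp _))
    (u := Lp.const 2 _ 1) (fun n => ?_) fun m n hmn => ?_
  · rw [← hmoment, ← inner_self_eq_norm_sq (𝕜 := ℂ), hinner, if_pos rfl]
    exact Complex.ofReal_re _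
  · rw [hinner, if_neg hmn]

/-- The standard Hilbert basis `(eₙ)` of `ℓ²(ℤ₊)`. -/
def stdHilbertBasis : HilbertBasis ℕ ℂ ℓ2 := .ofRepr (.refl ℂ ℓ2)

lemma stdHilbertBasis_apply (n : ℕ) : stdHilbertBasis n = e n :=
  (stdHilbertBasis.repr_symm_single n).symm

section ShiftX

variable {y : ℝ}

lemma xseq_pos (hy : 0 < y) : ∀ n, 0 < xseq y n
  | 0 => by simp only [xseq]; positivity
  | n + 1 => by simp only [xseq]; positivity

lemma xseq_zero_sq (y : ℝ) : xseq y 0 ^ 2 = y ^ 2 * (3 / 4) := by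
  rw [xseq, mul_pow, Real.sq_sqrt (by norm_num)]

lemma xseq_succ_sq (y : ℝ) (n : ℕ) :
    xseq y (n + 1) ^ 2 = ((n : ℝ) + 2) * (n + 4) / (n + 3) ^ 2 := by
  rw [xseq, div_pow, Real.sq_sqrt (by positivity)]

lemma prod_range_succ_xseq_sq (y : ℝ) (n : ℕ) :
    ∏ i ∈ Finset.range (n + 1), xseq y i ^ 2 = y ^ 2 / 2 * (((n : ℝ) + 3) / (n + 2)) := by
  induction n with
  | zero =>
    rw [Finset.prod_range_one, xseq_zero_sq]
    norm_num
    ring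
  | succ n ih =>
    rw [Finset.prod_range_succ, ih, xseq_succ_sq]
    push_cast
    field_simp
    ring

lemma isProbabilityMeasure_mux (hy : y ^ 2 ≤ 1) : IsProbabilityMeasure (mux y) where
  measure_univ := by
    simp only [mux, Measure.add_apply, Measure.smul_apply, measure_univ,
      Measure.restrict_apply_univ, Real.volume_Icc, smul_eq_mul, sub_zero, ENNReal.ofReal_one,
      mul_one]
    rw [← ENNReal.ofReal_add (sub_nonneg.2 hy) (by positivity), ← ENNReal.ofReal_add (by positivity)
      (by positivity), add_assoc, add_halves, sub_add_cancel, ENNReal.ofReal_one]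

lemma ae_mux_mem_Icc (y : ℝ) : ∀ᵐ s ∂mux y, s ∈ Set.Icc (0 : ℝ) 1 := by
  simp only [mux, ae_add_measure_iff]
  refine ⟨⟨Measure.ae_smul_measure ?_ _, Measure.ae_smul_measure ?_ _⟩,
    Measure.ae_smul_measure ?_ _⟩
  · exact (ae_dirac_iff measurableSet_Icc).2 (by simp)
  · exact ae_restrict_mem measurableSet_Icc
  · exact (ae_dirac_iff measurableSet_Icc).2 (by simp)

lemma integral_mux {E : Type*} [NormedAddCommGroup E] [NormedSpace ℝ E] [CompleteSpace E]
    (hy : y ^ 2 ≤ 1) {f : ℝ → E} (hf : IntegrableOn f (Set.Icc 0 1)) :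
    ∫ s, f s ∂mux y =
      (1 - y ^ 2) • f 0 + (y ^ 2 / 2) • (∫ s in 0..1, f s) + (y ^ 2 / 2) • f 1 := by
  have hdirac : ∀ c a : ℝ, Integrable f (ENNReal.ofReal c • Measure.dirac a) := fun c a =>
    (integrable_dirac enorm_lt_top).smul_measure ENNReal.ofReal_ne_top
  have hleb : Integrable f (ENNReal.ofReal (y ^ 2 / 2) • volume.restrict (Set.Icc 0 1)) :=
    Integrable.smul_measure hf ENNReal.ofReal_ne_top
  rw [mux, integral_add_measure ((hdirac _ 0).add_measure hleb) (hdirac _ 1),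
    integral_add_measure (hdirac _ 0) hleb, integral_smul_measure, integral_smul_measure,
    integral_smul_measure, integral_dirac, integral_dirac, integral_Icc_eq_integral_Ioc,
    ← intervalIntegral.integral_of_le zero_le_one, ENNReal.toReal_ofReal (sub_nonneg.2 hy),
    ENNReal.toReal_ofReal (by positivity)]

lemma integral_pow_mux (hy : y ^ 2 ≤ 1) (n : ℕ) :
    ∫ s, s ^ n ∂mux y = ∏ i ∈ Finset.range n, xseq y i ^ 2 := by
  rw [integral_mux hy (by fun_prop : Continuous fun s : ℝ => s ^ n).integrableOn_Icc, integral_pow]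
  cases n with
  | zero => simp [add_assoc]
  | succ n =>
    rw [prod_range_succ_xseq_sq]
    push_cast
    simp only [smul_eq_mul, one_pow, zero_pow n.succ_ne_zero]
    field_simp
    ring

end ShiftX

/-- For `0 < y ≤ 1`, the unilateral weighted shift `W_x` with weights
`x₀ = y√(3/4)`, `xₙ = √((n+1)(n+3))/(n+2)` (`n ≥ 1`) is subnormal; moreover
`μ_x = (1−y²)δ₀ + (y²/2)λ + (y²/2)δ₁` is a probability measure whose `n`-th moment is
`x₀²x₁²⋯x_{n−1}²` for every `n ≥ 1`. -/
theorem shift_x_subnormal (y : ℝ) (hy : 0 < y) (hy' : y ≤ 1)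
    (W : ℓ2 →L[ℂ] ℓ2) (hW : ∀ n : ℕ, W (e n) = ((xseq y n : ℂ)) • e (n + 1)) :
    SubnormalOp W ∧ IsProbabilityMeasure (mux y) ∧
      ∀ n : ℕ, 1 ≤ n →
        ∫ s, s ^ n ∂(mux y) = ∏ i ∈ Finset.range n, (xseq y i) ^ 2 := by
  have hy_sq : y ^ 2 ≤ 1 := pow_le_one₀ hy.le hy'
  have hprob : IsProbabilityMeasure (mux y) := isProbabilityMeasure_mux hy_sq
  refine ⟨?_, hprob, fun n _ => integral_pow_mux hy_sq n⟩
  refine subnormalOp_weightedShift_of_moments stdHilbertBasis (α := fun n => (xseq y n : ℂ))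
    (fun n => Complex.ofReal_ne_zero.2 (xseq_pos hy n).ne') (fun n => ?_) (ae_mux_mem_Icc y)
    fun n => ?_
  · rw [stdHilbertBasis_apply, stdHilbertBasis_apply, hW]
  · simp only [Complex.norm_real, Real.norm_eq_abs, sq_abs, integral_pow_mux hy_sq]
end
end

section
/- For every real a with 0 < a ≤ 1/√2 and every integer k ≥ 2, one has D(k+1) < D(k), where D(k) := √( ((k+1)²/(2k(k+2)) − a²) / (a⁴ − (5/2)a² + (k+1)²/(2k(k+2)) + (2k²+4k+3)/(4(k+1)²)) ). -/
noncomputable section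

/-- The threshold `D(k)` separating `k`-hyponormality from `(k+1)`-hyponormality. -/
def D (a : ℝ) (k : ℕ) : ℝ :=
  Real.sqrt ((((k : ℝ) + 1) ^ 2 / (2 * (k : ℝ) * ((k : ℝ) + 2)) - a ^ 2) /
    (a ^ 4 - (5 / 2) * a ^ 2 + ((k : ℝ) + 1) ^ 2 / (2 * (k : ℝ) * ((k : ℝ) + 2)) +
      (2 * (k : ℝ) ^ 2 + 4 * (k : ℝ) + 3) / (4 * ((k : ℝ) + 1) ^ 2)))

/-!
Put `t = 1/2 - a²` and `u = (k+1)² / (2k(k+2)) - 1/2`, so that `1 / (k+1)² = u / (1/2 + u)`. The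
reciprocal of `D(k)²` is then `3/2 + t² / (t + u) - (1/2) * (u / (1/2 + u)) * (u / (t + u))`. Since
`t ≥ 0`, each term is antitone in `u > 0`, the last one strictly because of its factor
`u / (1/2 + u)`. As `k` grows, `u` decreases, hence `D(k)` decreases.
-/

section OrderedField

variable {K : Type*} [Field K] [LinearOrder K] [IsStrictOrderedRing K] {c u v : K}

theorem div_const_add_le_div_const_add (hc : 0 ≤ c) (hu : 0 < u) (huv : u ≤ v) :
    u / (c + u) ≤ v / (c + v) := by
  rw [div_le_div_iff₀ (by linarith) (by linarith)]
  linarith [mul_le_mul_of_nonneg_left huv hc]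

theorem div_const_add_lt_div_const_add (hc : 0 < c) (hu : 0 ≤ u) (huv : u < v) :
    u / (c + u) < v / (c + v) := by
  rw [div_lt_div_iff₀ (by linarith) (by linarith)]
  linarith [mul_lt_mul_of_pos_left huv hc]

end OrderedField

namespace D

/-- The reciprocal of the square of the threshold `D(k)`, in the coordinates `t = 1/2 - a²` and
`u = excess k`. -/
def invSq (t u : ℝ) : ℝ :=
  3 / 2 + t ^ 2 / (t + u) - 1 / 2 * (u / (1 / 2 + u) * (u / (t + u)))

theorem add_mul_invSq {t u : ℝ} (h_add : t + u ≠ 0) (h_half : 1 / 2 + u ≠ 0) :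
    (t + u) * invSq t u = t ^ 2 + 3 / 2 * t + u + 1 / 4 * (u / (1 / 2 + u)) := by
  have h_cancel : u / (1 / 2 + u) * (1 / 2 + u) = u := div_mul_cancel₀ u h_half
  calc (t + u) * invSq t u
      = 3 / 2 * (t + u) + t ^ 2 - 1 / 2 * (u / (1 / 2 + u) * u) := by
        unfold invSq
        generalize u / (1 / 2 + u) = q
        field_simp
    _ = t ^ 2 + 3 / 2 * t + u + 1 / 4 * (u / (1 / 2 + u)) := by linear_combination -h_cancel / 2

theorem invSq_pos {t u : ℝ} (ht : 0 ≤ t) (hu : 0 < u) : 0 < invSq t u := by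
  have h_square : 0 ≤ t ^ 2 / (t + u) := by positivity
  have h_half : u / (1 / 2 + u) ≤ 1 := div_le_one_of_le₀ (by linarith) (by positivity)
  have h_t : u / (t + u) ≤ 1 := div_le_one_of_le₀ (by linarith) (by positivity)
  have h_prod : u / (1 / 2 + u) * (u / (t + u)) ≤ 1 := mul_le_one₀ h_half (by positivity) h_t
  unfold invSq
  linarith

theorem invSq_strictAntiOn {t : ℝ} (ht : 0 ≤ t) : StrictAntiOn (invSq t) (Set.Ioi 0) := by
  intro u (hu : 0 < u) v (hv : 0 < v) huv
  have h_square : t ^ 2 / (t + v) ≤ t ^ 2 / (t + u) := by gcongr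
  have h_prod : u / (1 / 2 + u) * (u / (t + u)) < v / (1 / 2 + v) * (v / (t + v)) :=
    mul_lt_mul (div_const_add_lt_div_const_add (by norm_num) hu.le huv)
      (div_const_add_le_div_const_add ht hu huv.le) (by positivity) (by positivity)
  unfold invSq
  linarith

/-- The amount `1 / (2k(k+2))` by which the term `(k+1)² / (2k(k+2))` of `D(k)` exceeds its
limit `1/2`. -/
def excess (k : ℕ) : ℝ :=
  1 / (2 * k * (k + 2))

theorem excess_pos {k : ℕ} (hk : 1 ≤ k) : 0 < excess k := by
  unfold excess
  positivity

theorem excess_strictAntiOn : StrictAntiOn excess (Set.Ici 1) := by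
  intro k (hk : 1 ≤ k) l _ hkl
  unfold excess
  gcongr

theorem sq_div_eq_half_add_excess {k : ℕ} (hk : 1 ≤ k) :
    ((k : ℝ) + 1) ^ 2 / (2 * k * (k + 2)) = 1 / 2 + excess k := by
  unfold excess
  field_simp
  ring

theorem excess_div_half_add_excess {k : ℕ} (hk : 1 ≤ k) :
    excess k / (1 / 2 + excess k) = 1 / ((k : ℝ) + 1) ^ 2 := by
  rw [← sq_div_eq_half_add_excess hk, excess]
  field_simp

theorem quadratic_div_sq_eq_half_add {k : ℕ} (hk : 1 ≤ k) :
    (2 * (k : ℝ) ^ 2 + 4 * k + 3) / (4 * ((k : ℝ) + 1) ^ 2) =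
      1 / 2 + 1 / 4 * (excess k / (1 / 2 + excess k)) := by
  rw [excess_div_half_add_excess hk]
  field_simp
  ring

theorem denominator_eq_numerator_mul_invSq {a : ℝ} {k : ℕ} (hk : 1 ≤ k)
    (h_num : 1 / 2 - a ^ 2 + excess k ≠ 0) :
    a ^ 4 - 5 / 2 * a ^ 2 + (1 / 2 + excess k) +
        (2 * (k : ℝ) ^ 2 + 4 * k + 3) / (4 * ((k : ℝ) + 1) ^ 2) =
      (1 / 2 - a ^ 2 + excess k) * invSq (1 / 2 - a ^ 2) (excess k) := by
  have h_half : 1 / 2 + excess k ≠ 0 := by linarith [excess_pos hk]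
  rw [quadratic_div_sq_eq_half_add hk, add_mul_invSq h_num h_half]
  ring

theorem eq_inv_sqrt_invSq {a : ℝ} {k : ℕ} (hk : 1 ≤ k)
    (h_num : 1 / 2 - a ^ 2 + excess k ≠ 0) :
    D a k = (√(invSq (1 / 2 - a ^ 2) (excess k)))⁻¹ := by
  rw [D, sq_div_eq_half_add_excess hk, denominator_eq_numerator_mul_invSq hk h_num,
    add_sub_right_comm, div_mul_cancel_left₀ h_num, Real.sqrt_inv]

end D

theorem D_strict_anti_general {a : ℝ} (ha : a ^ 2 ≤ 1 / 2) : StrictAntiOn (D a) (Set.Ici 1) := by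
  intro k (hk : 1 ≤ k) l (hl : 1 ≤ l) hkl
  have ht : 0 ≤ 1 / 2 - a ^ 2 := sub_nonneg.2 ha
  have hk_pos : 0 < D.excess k := D.excess_pos hk
  have hl_pos : 0 < D.excess l := D.excess_pos hl
  have h_invSq : D.invSq (1 / 2 - a ^ 2) (D.excess k) < D.invSq (1 / 2 - a ^ 2) (D.excess l) :=
    D.invSq_strictAntiOn ht hl_pos hk_pos (D.excess_strictAntiOn hk hl hkl)
  rw [D.eq_inv_sqrt_invSq hk (by positivity), D.eq_inv_sqrt_invSq hl (by positivity)]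
  have h_pos := D.invSq_pos ht hk_pos
  gcongr

/-- For `0 < a ≤ 1/√2` and every integer `k ≥ 2`, one has `D(k+1) < D(k)`. -/
theorem D_strict_anti (a : ℝ) (ha : 0 < a) (ha' : a ≤ 1 / Real.sqrt 2)
    (k : ℕ) (hk : 2 ≤ k) :
    D a (k + 1) < D a k := by
  have ha_sq : a ^ 2 ≤ 1 / 2 := by simpa using pow_le_pow_left₀ ha.le ha' 2
  exact D_strict_anti_general ha_sq (Set.mem_Ici.2 (by lia)) (Set.mem_Ici.2 (by lia))
    k.lt_succ_self
end
end

section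
/- For every real a with 0 < a ≤ 1/√2 and every integer n ≥ 1, the 2×2 real symmetric matrix with entries [(2n+5)/(2(n+2)³(n+3)), a²/(n+2)²; a²/(n+2)², a²(1 − ((n+2)/(2(n+1)))a²)] is positive semidefinite. -/
/-!
Let `x = n` and `t = a²`. For `x ≥ 0` the diagonal entries are at least `(5/3) / (x + 2)⁴` and
`t (1 - t)`, while the square of the off-diagonal entry is `t² / (x + 2)⁴`. Hence the determinant
is nonnegative as soon as `t ≤ (5/3) (1 - t)`, that is, `t ≤ 5/8`. Both diagonal estimates are
equalities at `x = 0`, so `5/8` is the optimal bound for `x ≥ 0`.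
-/

noncomputable section

theorem posSemidef_of_sq_le_mul {R : Type*} [CommRing R] [LinearOrder R] [IsStrictOrderedRing R]
    [StarRing R] [TrivialStar R] {p q r : R} (hp : 0 ≤ p) (hr : 0 ≤ r) (hdet : q ^ 2 ≤ p * r) :
    Matrix.PosSemidef !![p, q; q, r] := by
  refine .of_dotProduct_mulVec_nonneg ?_ fun v => ?_
  · ext i j
    fin_cases i <;> fin_cases j <;> simp
  · have hcross : (-(q * v 0 * v 1)) ^ 2 ≤ p * v 0 ^ 2 * (r * v 1 ^ 2) :=
      calc (-(q * v 0 * v 1)) ^ 2 = q ^ 2 * (v 0 * v 1) ^ 2 := by ring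
        _ ≤ p * r * (v 0 * v 1) ^ 2 := by gcongr
        _ = p * v 0 ^ 2 * (r * v 1 ^ 2) := by ring
    have hquad : dotProduct (star v) (Matrix.mulVec !![p, q; q, r] v) =
        p * v 0 ^ 2 + r * v 1 ^ 2 - 2 * (-(q * v 0 * v 1)) := by
      simp only [dotProduct, Pi.star_apply, star_trivial, Matrix.mulVec, Matrix.of_apply,
        Matrix.cons_val', Matrix.cons_val_fin_one, Fin.sum_univ_two, Matrix.cons_val_zero,
        Matrix.cons_val_one]
      ring
    rw [hquad, sub_nonneg]
    exact two_mul_le_add_of_sq_le_mul (by positivity) (by positivity) hcross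

section OrderedField

variable {K : Type*} [Field K] [LinearOrder K] [IsStrictOrderedRing K] {x t : K}

theorem five_thirds_div_pow_four_le (hx : 0 ≤ x) :
    5 / 3 / (x + 2) ^ 4 ≤ (2 * x + 5) / (2 * (x + 2) ^ 3 * (x + 3)) := by
  have hpoly : 5 * (2 * (x + 3)) ≤ 3 * ((2 * x + 5) * (x + 2)) := by
    linear_combination 17 * hx + 6 * sq_nonneg x
  rw [div_div, div_le_div_iff₀ (by positivity) (by positivity)]
  linear_combination (x + 2) ^ 3 * hpoly

theorem mul_one_sub_le_mul_one_sub_div_mul (hx : 0 ≤ x) (ht : 0 ≤ t) :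
    t * (1 - t) ≤ t * (1 - (x + 2) / (2 * (x + 1)) * t) := by
  have hcoeff : (x + 2) / (2 * (x + 1)) ≤ 1 :=
    (div_le_one (by positivity)).2 (by linarith)
  gcongr
  exact mul_le_of_le_one_left ht hcoeff

theorem sq_le_five_thirds_mul_one_sub (ht : 0 ≤ t) (ht' : t ≤ 5 / 8) :
    t ^ 2 ≤ 5 / 3 * (t * (1 - t)) := by
  linear_combination 8 / 3 * t * ht'

theorem hyponormality_test_matrix_psd_general [StarRing K] [TrivialStar K] {a : K}
    (hx : 0 ≤ x) (ha : a ^ 2 ≤ 5 / 8) :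
    Matrix.PosSemidef
      !![(2 * x + 5) / (2 * (x + 2) ^ 3 * (x + 3)), a ^ 2 / (x + 2) ^ 2;
        a ^ 2 / (x + 2) ^ 2, a ^ 2 * (1 - (x + 2) / (2 * (x + 1)) * a ^ 2)] := by
  have hdiag := mul_one_sub_le_mul_one_sub_div_mul hx (sq_nonneg a)
  have hdiag_nonneg : 0 ≤ a ^ 2 * (1 - a ^ 2) := mul_nonneg (sq_nonneg a) (by linarith)
  refine posSemidef_of_sq_le_mul (by positivity) (hdiag_nonneg.trans hdiag) ?_
  calc (a ^ 2 / (x + 2) ^ 2) ^ 2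
    _ = (a ^ 2) ^ 2 / (x + 2) ^ 4 := by rw [div_pow, ← pow_mul (x + 2)]
    _ ≤ 5 / 3 * (a ^ 2 * (1 - a ^ 2)) / (x + 2) ^ 4 := by
      gcongr
      exact sq_le_five_thirds_mul_one_sub (sq_nonneg a) ha
    _ = 5 / 3 / (x + 2) ^ 4 * (a ^ 2 * (1 - a ^ 2)) := by ring
    _ ≤ _ := mul_le_mul (five_thirds_div_pow_four_le hx) hdiag hdiag_nonneg (by positivity)

end OrderedField

theorem sq_le_one_div_of_le_one_div_sqrt {a b : ℝ} (ha : 0 ≤ a) (hb : 0 ≤ b) (hab : a ≤ 1 / √b) :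
    a ^ 2 ≤ 1 / b :=
  calc a ^ 2 ≤ (1 / √b) ^ 2 := by gcongr
    _ = 1 / b := by rw [div_pow, one_pow, Real.sq_sqrt hb]

/-- For `0 < a ≤ 1/√2` and every integer `n ≥ 1`, the 2×2 real symmetric matrix
`[(2n+5)/(2(n+2)³(n+3)), a²/(n+2)²; a²/(n+2)², a²(1 − ((n+2)/(2(n+1)))a²)]`
is positive semidefinite. -/
theorem hyponormality_test_matrix_psd (a : ℝ) (ha : 0 < a) (ha' : a ≤ 1 / Real.sqrt 2)
    (n : ℕ) (hn : 1 ≤ n) :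
    Matrix.PosSemidef
      !![(2 * (n : ℝ) + 5) / (2 * ((n : ℝ) + 2) ^ 3 * ((n : ℝ) + 3)),
          a ^ 2 / ((n : ℝ) + 2) ^ 2;
        a ^ 2 / ((n : ℝ) + 2) ^ 2,
          a ^ 2 * (1 - (((n : ℝ) + 2) / (2 * ((n : ℝ) + 1))) * a ^ 2)] := by
  have ha_sq := sq_le_one_div_of_le_one_div_sqrt ha.le zero_le_two ha'
  exact hyponormality_test_matrix_psd_general n.cast_nonneg (by linarith)
end
end

section
/- Let 0 < a ≤ 1/√2 and let k ≥ 2 be an integer. With A_k as defined, det A_k = a_k · a²(1−a²)·((k+1)²/(2k(k+2)) − a²), where a_k := [(1!·2!⋯(k−1)!)² · (2!·3!⋯(k+1)!) / (2^{k−1}·(k+2)!·(k+3)!⋯(2k+1)!)] · k(k+2). -/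
noncomputable section

/-- The entry function `g`: `g(m,0) = (m+2)/(m+1)` for `m ≥ 1`, `g(0,n) = 2` for `n ≥ 1`,
`g(m,n) = 2a²` for `m, n ≥ 1` (the value at `(0,0)` is irrelevant for `A_k`). -/
def gfun (a : ℝ) : ℕ × ℕ → ℝ
  | (0, 0) => 2
  | (m + 1, 0) => ((m : ℝ) + 3) / ((m : ℝ) + 2)
  | (0, _ + 1) => 2
  | (_ + 1, _ + 1) => 2 * a ^ 2

/-- The enumeration of the index set `S' = {(1,0),(0,1),(1,1),(2,0),(3,0),…,(k,0)}`. -/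
def Sidx' : ℕ → ℕ × ℕ
  | 0 => (1, 0)
  | 1 => (0, 1)
  | 2 => (1, 1)
  | i + 3 => (i + 2, 0)

/-- The `(k+2)×(k+2)` matrix `A_k` with entries `(1/2)·g(u+v)` for `u, v ∈ S'`. -/
def Ak (a : ℝ) (k : ℕ) : Matrix (Fin (k + 2)) (Fin (k + 2)) ℝ :=
  fun i j => (1 / 2) * gfun a (Sidx' (i : ℕ) + Sidx' (j : ℕ))

/-- The constant `a_k`. -/
def akConst (k : ℕ) : ℝ :=
  ((∏ i ∈ Finset.Icc 1 (k - 1), (Nat.factorial i : ℝ)) ^ 2 *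
      (∏ i ∈ Finset.Icc 2 (k + 1), (Nat.factorial i : ℝ)) /
      (2 ^ (k - 1) * ∏ i ∈ Finset.Icc (k + 2) (2 * k + 1), (Nat.factorial i : ℝ))) *
    ((k : ℝ) * ((k : ℝ) + 2))

/-!
Order the index set as `(1,0), …, (k,0)` followed by `(0,1), (1,1)`. The last two rows form the
block `D = !![1, a²; a², a²]` of determinant `a² (1 - a²)`, next to a block with all entries `a²`.
Since `(0, 1) D = (a², a²)`, subtracting the row of `(1,1)` from the first `k` rows clears the other
off-diagonal block and leaves `1/2 (H + (1 - 2a²) J)`, where `H i j = 1 / (i + j + 3)` is a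
shifted Hilbert matrix and `J` is the all-ones matrix.

`H` is a Cauchy matrix `C i j = 1 / (x i + y j)`, hence satisfies the Sylvester equation
`diag(x) C + C diag(y) = J`. Multiplying by `C⁻¹` and taking traces gives
`tr (C⁻¹ J) = ∑ i, x i + ∑ j, y j`, so by the matrix determinant lemma the rank-one perturbation
multiplies `det C` by `1 + (1 - 2a²) (∑ i, x i + ∑ j, y j)`, and `det C` is Cauchy's determinant.
-/

open Finset Matrix

theorem prod_Icc_eq_prod_range_add {M : Type*} [CommMonoid M] (f : ℕ → M) (m n : ℕ) :
    ∏ i ∈ Icc m (n + m), f i = ∏ i ∈ range (n + 1), f (i + m) := by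
  rw [← Ico_add_one_right_eq_Icc, prod_Ico_eq_prod_range, add_right_comm, add_tsub_cancel_right]
  simp only [add_comm m]

section BlockDeterminants

variable {R ι κ : Type*} [CommRing R] [Fintype ι] [DecidableEq ι] [Fintype κ] [DecidableEq κ]

theorem det_fromBlocks_mul_right (A : Matrix ι ι R) (E : Matrix ι κ R) (C : Matrix κ ι R)
    (D : Matrix κ κ R) : (fromBlocks A (E * D) C D).det = (A - E * C).det * D.det := by
  have factor : fromBlocks A (E * D) C D =
      fromBlocks 1 E 0 1 * fromBlocks (A - E * C) 0 C D := by
    simp [fromBlocks_multiply]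
  rw [factor, det_mul, det_fromBlocks_zero₂₁, det_fromBlocks_zero₁₂]
  simp

theorem det_eq_mul_det_of_col_zero_eq_smul {n : ℕ} (M : Matrix (Fin (n + 1)) (Fin (n + 1)) R)
    (c : Fin n → R) (hc : ∀ i, M i.succ 0 = c i * M 0 0) :
    M.det = M 0 0 * (of fun i j ↦ M i.succ j.succ - c i * M 0 j.succ).det := by
  let e : Fin n ⊕ Unit ≃ Fin (n + 1) :=
    (Equiv.optionEquivSumPUnit (Fin n)).symm.trans (finSuccEquiv n).symm
  let D : Matrix Unit Unit R := of fun _ _ ↦ M 0 0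
  have blocks : M.submatrix e e = fromBlocks (of fun i j ↦ M i.succ j.succ)
      (replicateCol Unit c * D) (replicateRow Unit fun j ↦ M 0 j.succ) D := by
    ext (i | i) (j | j) <;> simp [e, D, hc, mul_apply]
  have schur : (of fun i j : Fin n ↦ M i.succ j.succ) -
      replicateCol Unit c * replicateRow Unit (fun j ↦ M 0 j.succ) =
        of fun i j ↦ M i.succ j.succ - c i * M 0 j.succ := by
    ext i j
    simp [mul_apply]
  rw [← det_submatrix_equiv_self e M, blocks, det_fromBlocks_mul_right, mul_comm, det_unique,
    schur]
  rfl

theorem det_add_smul_vecMulVec_of_sylvester {X Y C : Matrix ι ι R} {u v : ι → R}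
    (hC : IsUnit C.det) (sylvester : X * C + C * Y = vecMulVec u v) (s : R) :
    (C + s • vecMulVec u v).det = C.det * (1 + s * (X.trace + Y.trace)) := by
  have trace_eq : v ⬝ᵥ C⁻¹ *ᵥ u = X.trace + Y.trace := by
    calc v ⬝ᵥ C⁻¹ *ᵥ u = (C⁻¹ * (X * C + C * Y)).trace := by
          rw [sylvester, mul_vecMulVec, trace_vecMulVec, dotProduct_comm]
      _ = X.trace + Y.trace := by
          rw [Matrix.mul_add, trace_add, trace_mul_comm, Matrix.mul_assoc,
            mul_nonsing_inv C hC, Matrix.mul_one, nonsing_inv_mul_cancel_left C Y hC]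
  have factor : C + s • vecMulVec u v =
      C * (1 + replicateCol Unit (C⁻¹ *ᵥ u) * replicateRow Unit (s • v)) := by
    rw [Matrix.mul_add, Matrix.mul_one, ← vecMulVec_eq, mul_vecMulVec, mulVec_mulVec,
      mul_nonsing_inv C hC, one_mulVec, vecMulVec_smul]
  rw [factor, det_mul, det_one_add_replicateCol_mul_replicateRow, smul_dotProduct, trace_eq,
    smul_eq_mul]

end BlockDeterminants

section Cauchy

variable {K : Type*} [Field K]

/-- The Cauchy matrix with entries `1 / (x i + y j)`; with this sign convention the Hilbert
matrices are the case of natural number nodes. -/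
def cauchyMatrix {m n : Type*} (x : m → K) (y : n → K) : Matrix m n K :=
  of fun i j ↦ (x i + y j)⁻¹

theorem diagonal_mul_cauchyMatrix_add_cauchyMatrix_mul_diagonal {m n : Type*} [Fintype m]
    [DecidableEq m] [Fintype n] [DecidableEq n] {x : m → K} {y : n → K}
    (hxy : ∀ i j, x i + y j ≠ 0) :
    diagonal x * cauchyMatrix x y + cauchyMatrix x y * diagonal y = vecMulVec 1 1 := by
  ext i j
  rw [Matrix.add_apply, diagonal_mul, mul_diagonal, mul_comm, ← mul_add]
  simpa [cauchyMatrix] using inv_mul_cancel₀ (hxy i j)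

theorem det_cauchyMatrix_add_const {n : Type*} [Fintype n] [DecidableEq n] {x y : n → K}
    (hxy : ∀ i j, x i + y j ≠ 0) (hdet : (cauchyMatrix x y).det ≠ 0) (s : K) :
    (cauchyMatrix x y + of fun _ _ ↦ s).det =
      (cauchyMatrix x y).det * (1 + s * ∑ i, (x i + y i)) := by
  have const_eq : (of fun _ _ ↦ s : Matrix n n K) = s • vecMulVec 1 1 := by
    ext; simp
  rw [const_eq, det_add_smul_vecMulVec_of_sylvester hdet.isUnit
    (diagonal_mul_cauchyMatrix_add_cauchyMatrix_mul_diagonal hxy), trace_diagonal,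
    trace_diagonal, sum_add_distrib]

theorem det_cauchyMatrix_succ {n : ℕ} {x y : Fin (n + 1) → K} (hxy : ∀ i j, x i + y j ≠ 0) :
    (cauchyMatrix x y).det =
      (x 0 + y 0)⁻¹ * ((∏ i : Fin n, (x i.succ - x 0) / (x i.succ + y 0)) *
        ((∏ j : Fin n, (y j.succ - y 0) / (x 0 + y j.succ)) *
          (cauchyMatrix (Fin.tail x) (Fin.tail y)).det)) := by
  rw [det_eq_mul_det_of_col_zero_eq_smul (cauchyMatrix x y)
    (fun i ↦ (x 0 + y 0) / (x i.succ + y 0))]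
  · rw [← det_mul_row, ← det_mul_column]
    congr 2
    ext i j
    have := hxy i.succ j.succ
    have := hxy i.succ 0
    have := hxy 0 j.succ
    have := hxy 0 0
    simp only [cauchyMatrix, of_apply, Fin.tail]
    field_simp
    ring
  · intro i
    have := hxy 0 0
    simp only [cauchyMatrix, of_apply]
    field_simp

theorem det_cauchyMatrix {n : ℕ} {x y : Fin n → K} (hxy : ∀ i j, x i + y j ≠ 0) :
    (cauchyMatrix x y).det =
      (∏ i, ∏ j ∈ Ioi i, (x j - x i)) * (∏ i, ∏ j ∈ Ioi i, (y j - y i)) /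
        ∏ i, ∏ j, (x i + y j) := by
  induction n with
  | zero => simp
  | succ n ih =>
    rw [det_cauchyMatrix_succ hxy,
      ih (x := Fin.tail x) (y := Fin.tail y) fun i j ↦ hxy i.succ j.succ]
    simp only [Fin.tail, Fin.prod_univ_succ, Fin.prod_Ioi_zero, Fin.prod_Ioi_succ,
      prod_mul_distrib, div_eq_mul_inv, mul_inv, prod_inv_distrib]
    ring

end Cauchy

section Hilbert

/-- The `n × n` Hilbert matrix shifted by `c`, with entries `1 / (i + j + c + 1)` for indices
`i`, `j` counted from `0`, encoded as a Cauchy matrix. -/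
def shiftedHilbertMatrix (K : Type*) [Field K] (n c : ℕ) : Matrix (Fin n) (Fin n) K :=
  cauchyMatrix (fun i ↦ (i : K)) (fun j ↦ (j : K) + c + 1)

theorem prod_prod_Ioi_natCast_sub (R : Type*) [CommRing R] (n : ℕ) :
    ∏ i : Fin n, ∏ j ∈ Ioi i, ((j : R) - (i : R)) = ∏ i ∈ range n, (i.factorial : R) := by
  cases n with
  | zero => simp
  | succ n =>
    rw [← det_vandermonde, det_vandermonde_id_eq_superFactorial,
      ← Nat.prod_range_succ_factorial, Nat.cast_prod]

theorem natCast_add_natCast_add_one_ne_zero (R : Type*) [AddMonoidWithOne R] [CharZero R]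
    (i j c : ℕ) : (i : R) + (j + c + 1) ≠ 0 := by
  exact_mod_cast (i + (j + c)).succ_ne_zero

theorem sum_natCast_add_natCast_add_one (R : Type*) [CommSemiring R] (n : ℕ) (c : R) :
    ∑ i : Fin n, ((i : R) + ((i : R) + c + 1)) = n * (n + c) := by
  induction n with
  | zero => simp
  | succ n ih =>
    rw [Fin.sum_univ_castSucc]
    simp only [Fin.val_castSucc, Fin.val_last, ih]
    push_cast
    ring

variable (K : Type*) [Field K] [CharZero K]

theorem prod_natCast_add_add_one_eq_factorial_div (m n : ℕ) :
    ∏ j : Fin n, ((m : K) + j + 1) = ((m + n).factorial : K) / m.factorial := by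
  rw [eq_div_iff (Nat.cast_ne_zero.mpr m.factorial_ne_zero), ← Nat.factorial_mul_ascFactorial,
    Nat.ascFactorial_eq_prod_range, Fin.prod_univ_eq_prod_range (fun j ↦ (m : K) + j + 1)]
  push_cast
  rw [mul_comm]
  simp only [add_right_comm]

theorem det_shiftedHilbertMatrix (n c : ℕ) :
    (shiftedHilbertMatrix K n c).det =
      (∏ i ∈ range n, (i.factorial : K)) ^ 2 * (∏ i ∈ range n, ((i + c).factorial : K)) /
        ∏ i ∈ range n, ((i + c + n).factorial : K) := by
  have denominator : ∏ i : Fin n, ∏ j : Fin n, ((i : K) + ((j : K) + c + 1)) =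
      (∏ i ∈ range n, ((i + c + n).factorial : K)) / ∏ i ∈ range n, ((i + c).factorial : K) := by
    rw [← prod_div_distrib,
      ← Fin.prod_univ_eq_prod_range fun i ↦ ((i + c + n).factorial : K) / (i + c).factorial]
    refine prod_congr rfl fun i _ ↦ ?_
    rw [← prod_natCast_add_add_one_eq_factorial_div]
    refine prod_congr rfl fun j _ ↦ ?_
    push_cast
    ring
  rw [shiftedHilbertMatrix, det_cauchyMatrix fun i j ↦ natCast_add_natCast_add_one_ne_zero K i j c,
    denominator]
  simp only [add_sub_add_right_eq_sub, prod_prod_Ioi_natCast_sub]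
  rw [div_div_eq_mul_div, sq]

theorem det_shiftedHilbertMatrix_ne_zero (n c : ℕ) :
    (shiftedHilbertMatrix K n c).det ≠ 0 := by
  simp [det_shiftedHilbertMatrix, prod_ne_zero_iff, Nat.factorial_ne_zero]

variable {K} in
theorem det_shiftedHilbertMatrix_add_const (n c : ℕ) (s : K) :
    (shiftedHilbertMatrix K n c + of fun _ _ ↦ s).det =
      (shiftedHilbertMatrix K n c).det * (1 + s * (n * (n + c))) := by
  rw [← sum_natCast_add_natCast_add_one]
  exact det_cauchyMatrix_add_const (x := fun i : Fin n ↦ (i : K))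
    (fun i j ↦ natCast_add_natCast_add_one_ne_zero K i j c)
    (det_shiftedHilbertMatrix_ne_zero K n c) s

end Hilbert

section Ak

/-- The reordering of the rows of `A_k`, `k = n + 1`, that lists `(1,0), …, (k,0)` first and
`(0,1), (1,1)` last. -/
def sidxEquiv (n : ℕ) : Fin (n + 1) ⊕ Fin 2 ≃ Fin (n + 3) :=
  Equiv.ofBijective
    (Sum.elim (Fin.cases 0 fun i : Fin n ↦ i.succ.succ.succ) ![1, 2]) <|
    (Fintype.bijective_iff_surjective_and_card _).mpr
      ⟨Fin.cases ⟨.inl 0, rfl⟩ <| Fin.cases ⟨.inr 0, rfl⟩ <| Fin.cases ⟨.inr 1, rfl⟩ fun i ↦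
        ⟨.inl i.succ, rfl⟩, by simp⟩

theorem Sidx'_sidxEquiv_inl {n : ℕ} (i : Fin (n + 1)) :
    Sidx' (sidxEquiv n (.inl i)) = ((i : ℕ) + 1, 0) := by
  cases i using Fin.cases <;> rfl

theorem Sidx'_sidxEquiv_inr {n : ℕ} (i : Fin 2) :
    Sidx' (sidxEquiv n (.inr i)) = ((i : ℕ), 1) := by
  fin_cases i <;> rfl

theorem gfun_zero_right (a : ℝ) {m : ℕ} (hm : m ≠ 0) : gfun a (m, 0) = ((m : ℝ) + 1)⁻¹ + 1 := by
  obtain ⟨m, rfl⟩ := Nat.exists_eq_succ_of_ne_zero hm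
  rw [gfun]
  push_cast
  field_simp
  ring

theorem gfun_of_ne_zero (a : ℝ) {m n : ℕ} (hm : m ≠ 0) (hn : n ≠ 0) :
    gfun a (m, n) = 2 * a ^ 2 := by
  obtain ⟨m, rfl⟩ := Nat.exists_eq_succ_of_ne_zero hm
  obtain ⟨n, rfl⟩ := Nat.exists_eq_succ_of_ne_zero hn
  rfl

theorem Ak_submatrix_sidxEquiv (a : ℝ) (n : ℕ) :
    (Ak a (n + 1)).submatrix (sidxEquiv n) (sidxEquiv n) =
      fromBlocks ((1 / 2 : ℝ) • (shiftedHilbertMatrix ℝ (n + 1) 2 + of fun _ _ ↦ 1))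
        (of fun _ _ ↦ a ^ 2) (of fun _ _ ↦ a ^ 2) !![1, a ^ 2; a ^ 2, a ^ 2] := by
  ext (i | i) (j | j)
  · have entry : Ak a (n + 1) (sidxEquiv n (.inl i)) (sidxEquiv n (.inl j)) =
        1 / 2 * (((i : ℝ) + ((j : ℝ) + (2 : ℕ) + 1))⁻¹ + 1) := by
      rw [Ak, Sidx'_sidxEquiv_inl, Sidx'_sidxEquiv_inl, Prod.mk_add_mk, add_zero,
        gfun_zero_right a (by omega)]
      push_cast
      ring_nf
    exact entry
  · simp [Ak, Sidx'_sidxEquiv_inl, Sidx'_sidxEquiv_inr, gfun_of_ne_zero]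
  · simp [Ak, Sidx'_sidxEquiv_inl, Sidx'_sidxEquiv_inr, gfun_of_ne_zero]
  · fin_cases i <;> fin_cases j <;> simp [Ak, Sidx'_sidxEquiv_inr, gfun]

theorem det_Ak_eq_mul_det_shiftedHilbertMatrix_add_const (a : ℝ) (n : ℕ) :
    (Ak a (n + 1)).det = a ^ 2 * (1 - a ^ 2) *
      ((shiftedHilbertMatrix ℝ (n + 1) 2 + of fun _ _ ↦ 1 - 2 * a ^ 2).det / 2 ^ (n + 1)) := by
  let E : Matrix (Fin (n + 1)) (Fin 2) ℝ := of fun _ ↦ ![0, 1]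
  let J : Matrix (Fin 2) (Fin (n + 1)) ℝ := of fun _ _ ↦ a ^ 2
  have upper_right : (of fun _ _ ↦ a ^ 2) = E * !![1, a ^ 2; a ^ 2, a ^ 2] := by
    ext i j
    fin_cases j <;> simp [E, mul_apply]
  have mul_eq : E * J = of fun _ _ ↦ a ^ 2 := by
    ext i j
    simp [E, J, mul_apply]
  have schur : (1 / 2 : ℝ) • (shiftedHilbertMatrix ℝ (n + 1) 2 + of fun _ _ ↦ 1) - E * J =
      (1 / 2 : ℝ) • (shiftedHilbertMatrix ℝ (n + 1) 2 + of fun _ _ ↦ 1 - 2 * a ^ 2) := by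
    rw [mul_eq]
    ext i j
    simp only [Matrix.sub_apply, Matrix.smul_apply, Matrix.add_apply, of_apply, smul_eq_mul]
    ring
  rw [← det_submatrix_equiv_self (sidxEquiv n), Ak_submatrix_sidxEquiv, upper_right,
    det_fromBlocks_mul_right, schur, det_smul, Fintype.card_fin, det_fin_two_of,
    one_div, inv_pow]
  ring

theorem akConst_succ (n : ℕ) :
    akConst (n + 1) =
      (shiftedHilbertMatrix ℝ (n + 1) 2).det / 2 ^ n * ((n + 1) * (n + 3)) := by
  have prod_from_one : ∏ i ∈ Icc 1 n, (i.factorial : ℝ) =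
      ∏ i ∈ range (n + 1), (i.factorial : ℝ) := by
    exact_mod_cast (Nat.prod_Icc_factorial n).trans (Nat.prod_range_succ_factorial n).symm
  have prod_from_two : ∏ i ∈ Icc 2 (n + 1 + 1), (i.factorial : ℝ) =
      ∏ i ∈ range (n + 1), ((i + 2).factorial : ℝ) :=
    prod_Icc_eq_prod_range_add _ 2 n
  have prod_denominator : ∏ i ∈ Icc (n + 1 + 2) (2 * (n + 1) + 1), (i.factorial : ℝ) =
      ∏ i ∈ range (n + 1), ((i + 2 + (n + 1)).factorial : ℝ) := by
    rw [show 2 * (n + 1) + 1 = n + (n + 1 + 2) by ring, prod_Icc_eq_prod_range_add]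
    simp only [add_assoc, add_comm (n + 1)]
  rw [akConst, det_shiftedHilbertMatrix, add_tsub_cancel_right, prod_from_one, prod_from_two,
    prod_denominator]
  push_cast
  ring

end Ak

theorem det_Ak_formula_general (a : ℝ) {k : ℕ} (hk : k ≠ 0) :
    (Ak a k).det =
      akConst k * (a ^ 2 * (1 - a ^ 2) *
        (((k : ℝ) + 1) ^ 2 / (2 * (k : ℝ) * ((k : ℝ) + 2)) - a ^ 2)) := by
  obtain ⟨n, rfl⟩ := Nat.exists_eq_succ_of_ne_zero hk
  rw [Nat.succ_eq_add_one, det_Ak_eq_mul_det_shiftedHilbertMatrix_add_const,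
    det_shiftedHilbertMatrix_add_const, akConst_succ]
  push_cast
  field_simp
  ring

/-- For `0 < a ≤ 1/√2` and `k ≥ 2`:
`det A_k = a_k · a²(1−a²)·((k+1)²/(2k(k+2)) − a²)`. -/
theorem det_Ak_formula (a : ℝ) (ha : 0 < a) (ha' : a ≤ 1 / Real.sqrt 2)
    (k : ℕ) (hk : 2 ≤ k) :
    (Ak a k).det =
      akConst k * (a ^ 2 * (1 - a ^ 2) *
        (((k : ℝ) + 1) ^ 2 / (2 * (k : ℝ) * ((k : ℝ) + 2)) - a ^ 2)) :=
  det_Ak_formula_general a (by omega)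
end
end
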